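/- arXiv:1312.6292 — 2 statements merged into one kernel-verified Lean document; each statement's English description precedes it below -/
import Mathlib

section
/- Let V and W be finite-dimensional real vector spaces, W with a nondegenerate symmetric bilinear form, and let β : V × V → W be a flat symmetric bilinear map. Then the set RE*(β) of regular elements X of β with dim U(X) minimal is an open and dense subset of V. -/
open Module Submodule

/-!
The subspace `U(X)` is the radical of the form `B` on `β(X,V)`, so it has dimension
`rank β(X) - rank G(X)`, where `G(X)` is the Gram form `(v, w) ↦ B(β(X,v), β(X,w))` on `V`.
The ranks of `β(X)` and of `G(X)` are both maximal at a generic `X`: a nonzero minor stays nonzero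
nearby, and along a line it is a polynomial, hence has only finitely many zeros. Since the two
sets of maximal rank meet, `RE*(β)` is their intersection.
-/

open scoped Topology

section Rank

variable {K E F G W ι : Type*} [Field K] [AddCommGroup E] [Module K E] [AddCommGroup F] [Module K F]
  [AddCommGroup G] [Module K G] [AddCommGroup W] [Module K W]

lemma finrank_range_comp_of_injective {f : F →ₗ[K] G} (hf : Function.Injective f) (g : E →ₗ[K] F) :
    finrank K (LinearMap.range (f ∘ₗ g)) = finrank K (LinearMap.range g) := by
  rw [LinearMap.range_comp]
  exact (equivMapOfInjective f hf _).finrank_eq.symm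

lemma finrank_range_comp_add_finrank_range_inf_ker (f : F →ₗ[K] G) (g : E →ₗ[K] F)
    [FiniteDimensional K (LinearMap.range g)] :
    finrank K (LinearMap.range (f ∘ₗ g)) + finrank K ↥(LinearMap.range g ⊓ LinearMap.ker f) =
      finrank K (LinearMap.range g) := by
  rw [LinearMap.range_comp, ← LinearMap.range_domRestrict, ← map_comap_subtype,
    finrank_map_subtype_eq, ← LinearMap.ker_domRestrict]
  exact LinearMap.finrank_range_add_finrank_ker _

lemma exists_linearIndependent_comp_of_finrank_range (T : E →ₗ[K] F) :
    ∃ e : Fin (finrank K (LinearMap.range T)) → E, LinearIndependent K (T ∘ e) := by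
  obtain ⟨w, hw⟩ := exists_linearIndependent_of_le_finrank (le_refl (finrank K (LinearMap.range T)))
  choose e he using fun i => (w i).2
  refine ⟨e, ?_⟩
  rw [show T ∘ e = (LinearMap.range T).subtype ∘ w from funext he]
  exact hw.map' _ (ker_subtype _)

lemma exists_matrix_of_apply_eq_one_of_linearIndependent [Finite ι] [DecidableEq ι]
    {φ : ι → Dual K F} (hφ : LinearIndependent K φ) :
    ∃ f : ι → F, Matrix.of (fun i j => φ i (f j)) = 1 := by
  have := Fintype.ofFinite ι
  have hsurj : Function.Surjective (Fintype.linearCombination K φ).flip :=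
    LinearMap.flip_surjective_iff₁.2 hφ.fintypeLinearCombination_injective
  choose f hf using fun j => hsurj (LinearMap.proj j)
  refine ⟨f, Matrix.ext fun i j => ?_⟩
  calc φ i (f j) = (Fintype.linearCombination K φ).flip (f j) (Pi.single i 1) := by
        simp [Fintype.linearCombination_apply_single]
    _ = (1 : Matrix ι ι K) i j := by
        simp [hf, Matrix.one_apply, Pi.single_apply, eq_comm]

lemma exists_det_ne_zero_of_finrank_range (T : E →ₗ[K] Dual K F) :
    ∃ (e : Fin (finrank K (LinearMap.range T)) → E) (f : Fin (finrank K (LinearMap.range T)) → F),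
      (Matrix.of fun i j => T (e i) (f j)).det ≠ 0 := by
  obtain ⟨e, he⟩ := exists_linearIndependent_comp_of_finrank_range T
  obtain ⟨f, hf⟩ := exists_matrix_of_apply_eq_one_of_linearIndependent he
  refine ⟨e, f, ?_⟩
  change (Matrix.of fun i j => (T ∘ e) i (f j)).det ≠ 0
  rw [hf, Matrix.det_one]
  exact one_ne_zero

lemma card_le_finrank_range_of_det_ne_zero [Fintype ι] [DecidableEq ι] (T : E →ₗ[K] Dual K F)
    [FiniteDimensional K (LinearMap.range T)] {e : ι → E} {f : ι → F}
    (hdet : (Matrix.of fun i j => T (e i) (f j)).det ≠ 0) :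
    Fintype.card ι ≤ finrank K (LinearMap.range T) := by
  have hli : LinearIndependent K fun i => LinearMap.rangeRestrict T (e i) :=
    .of_comp (LinearMap.pi (fun j => LinearMap.applyₗ (f j)) ∘ₗ (LinearMap.range T).subtype)
      (Matrix.linearIndependent_rows_of_det_ne_zero hdet)
  exact hli.fintype_card_le_finrank

/-- The radical `range T ∩ (range T)⊥` of the restriction of `B` to the range of `T`; for
`T = β(X)` this is `U(X)`. -/
def rangeRadical (B : LinearMap.BilinForm K W) (T : E →ₗ[K] W) : Submodule K W :=
  LinearMap.range T ⊓ B.orthogonal (LinearMap.range T)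

/-- The pullback of `B` along `T`. The arguments are swapped, `gramForm B T u v = B (T v) (T u)`,
to match the side on which `LinearMap.BilinForm.orthogonal` is taken when `B` is not symmetric. -/
def gramForm (B : LinearMap.BilinForm K W) (T : E →ₗ[K] W) : LinearMap.BilinForm K E :=
  (B ∘ₗ T).flip ∘ₗ T

lemma finrank_range_gramForm_add_finrank_rangeRadical (B : LinearMap.BilinForm K W)
    (T : E →ₗ[K] W) [FiniteDimensional K (LinearMap.range T)] :
    finrank K (LinearMap.range (gramForm B T)) + finrank K (rangeRadical B T) =
      finrank K (LinearMap.range T) := by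
  have horth : B.orthogonal (LinearMap.range T) = LinearMap.ker (B ∘ₗ T).flip := by
    ext w
    simp [LinearMap.BilinForm.mem_orthogonal_iff, LinearMap.ext_iff]
  rw [rangeRadical, horth]
  exact finrank_range_comp_add_finrank_range_inf_ker _ _

end Rank

section Subalgebra

variable {K V W ι : Type*} [Field K] [AddCommGroup W] [Module K W]

lemma det_mem_subalgebra [Fintype ι] [DecidableEq ι] (S : Subalgebra K (V → K))
    {M : V → Matrix ι ι K} (hM : ∀ i j, (fun X => M X i j) ∈ S) : (fun X => (M X).det) ∈ S := by
  have hdet : (fun X => (M X).det) =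
      ∑ σ : Equiv.Perm ι, (Equiv.Perm.sign σ : ℤ) • ∏ i, fun X => M X (σ i) i := by
    ext X
    simp [Matrix.det_apply']
  rw [hdet]
  exact sum_mem fun σ _ => zsmul_mem (prod_mem fun i _ => hM (σ i) i) _

lemma bilinForm_apply_mem_subalgebra [FiniteDimensional K W] (S : Subalgebra K (V → K))
    (B : LinearMap.BilinForm K W) {f g : V → W} (hf : ∀ φ : Dual K W, (fun X => φ (f X)) ∈ S)
    (hg : ∀ φ : Dual K W, (fun X => φ (g X)) ∈ S) : (fun X => B (f X) (g X)) ∈ S := by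
  let b := finBasis K W
  have hexpand : (fun X => B (f X) (g X)) =
      ∑ i, (fun X => b.coord i (f X)) * fun X => B (b i) (g X) := by
    ext X
    conv_lhs => rw [← b.sum_repr (f X)]
    simp only [map_sum, map_smul, LinearMap.sum_apply, LinearMap.smul_apply, smul_eq_mul,
      Finset.sum_apply, Pi.mul_apply, Basis.coord_apply]
  rw [hexpand]
  exact sum_mem fun i _ => mul_mem (hf _) (hg _)

end Subalgebra

section PolynomialOnLines

variable (K V : Type*) [Field K] [AddCommGroup V] [Module K V]

/-- The functions on `V` whose restriction to every affine line, in its affine parameter, is a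
polynomial. -/
def polynomialOnLines : Subalgebra K (V → K) where
  carrier := {f | ∀ X Y : V, ∃ p : Polynomial K, ∀ t, f (AffineMap.lineMap X Y t) = p.eval t}
  mul_mem' hf hg X Y := by
    obtain ⟨p, hp⟩ := hf X Y
    obtain ⟨q, hq⟩ := hg X Y
    exact ⟨p * q, fun t => by simp [hp, hq]⟩
  add_mem' hf hg X Y := by
    obtain ⟨p, hp⟩ := hf X Y
    obtain ⟨q, hq⟩ := hg X Y
    exact ⟨p + q, fun t => by simp [hp, hq]⟩
  algebraMap_mem' c _ _ := ⟨Polynomial.C c, fun t => by simp⟩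

variable {K V}

lemma dual_mem_polynomialOnLines (φ : Dual K V) : ⇑φ ∈ polynomialOnLines K V := fun X Y =>
  ⟨Polynomial.C (φ (Y - X)) * Polynomial.X + Polynomial.C (φ X), fun t => by
    simp [AffineMap.lineMap_apply_module', mul_comm]⟩

lemma dense_setOf_ne_zero_of_mem_polynomialOnLines [TopologicalSpace K] [IsTopologicalRing K]
    [T1Space K] [∀ x : K, (𝓝[≠] x).NeBot] [TopologicalSpace V] [IsTopologicalAddGroup V]
    [ContinuousSMul K V] {f : V → K} (hf : f ∈ polynomialOnLines K V) {X₀ : V} (hX₀ : f X₀ ≠ 0) :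
    Dense {X | f X ≠ 0} := by
  intro Y
  obtain ⟨p, hp⟩ := hf Y X₀
  have hp₀ : p ≠ 0 := by
    rintro rfl
    exact hX₀ (by simpa using hp 1)
  have hline : Continuous (AffineMap.lineMap Y X₀ : K →ᵃ[K] V) := AffineMap.lineMap_continuous
  have hdense : Dense {t | p.eval t ≠ 0} :=
    (dense_univ.sdiff_finite (p.finite_setOfPred_isRoot hp₀)).mono fun t ht => ht.2
  have hmaps : Set.MapsTo (AffineMap.lineMap Y X₀ : K →ᵃ[K] V) {t | p.eval t ≠ 0} {X | f X ≠ 0} :=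
    fun t ht => (hp t).trans_ne ht
  simpa using map_mem_closure hline (hdense 0) hmaps

end PolynomialOnLines

section MaximalRank

variable {K V E F W : Type*} [Field K] [AddCommGroup E] [Module K E] [AddCommGroup F] [Module K F]
  [AddCommGroup W] [Module K W]

/-- The parameters at which a family of linear maps attains its maximal rank; for the family
`X ↦ β(X)` these are the regular elements of `β`. -/
def maximalRankSet (A : V → E →ₗ[K] F) : Set V :=
  {X | ∀ Z, finrank K (LinearMap.range (A Z)) ≤ finrank K (LinearMap.range (A X))}

lemma maximalRankSet_nonempty [Nonempty V] {A : V → E →ₗ[K] F} {n : ℕ}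
    (hA : ∀ X, finrank K (LinearMap.range (A X)) ≤ n) : (maximalRankSet A).Nonempty := by
  obtain ⟨_, ⟨X, rfl⟩, hX⟩ := BddAbove.exists_isGreatest_of_nonempty
    ⟨n, Set.forall_mem_range.2 hA⟩ (Set.range_nonempty fun X => finrank K (LinearMap.range (A X)))
  exact ⟨X, fun Z => hX ⟨Z, rfl⟩⟩

lemma maximalRankSet_comp_of_injective {f : F →ₗ[K] W} (hf : Function.Injective f)
    (A : V → E →ₗ[K] F) : maximalRankSet (fun X => f ∘ₗ A X) = maximalRankSet A := by
  simp only [maximalRankSet, finrank_range_comp_of_injective hf]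

lemma mem_maximalRankSet_of_det_ne_zero {A : V → E →ₗ[K] Dual K F} {X₀ X : V}
    [FiniteDimensional K (LinearMap.range (A X))] (hX₀ : X₀ ∈ maximalRankSet A)
    {e : Fin (finrank K (LinearMap.range (A X₀))) → E}
    {f : Fin (finrank K (LinearMap.range (A X₀))) → F}
    (hdet : (Matrix.of fun i j => A X (e i) (f j)).det ≠ 0) : X ∈ maximalRankSet A := fun Z =>
  (hX₀ Z).trans (by simpa using card_le_finrank_range_of_det_ne_zero (A X) hdet)

lemma isOpen_maximalRankSet [TopologicalSpace K] [IsTopologicalRing K] [T1Space K]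
    [TopologicalSpace V] {A : V → E →ₗ[K] Dual K F}
    (hfin : ∀ X, FiniteDimensional K (LinearMap.range (A X)))
    (hcont : ∀ e f, Continuous fun X => A X e f) : IsOpen (maximalRankSet A) := by
  rw [isOpen_iff_mem_nhds]
  intro X₀ hX₀
  obtain ⟨e, f, hdet₀⟩ := exists_det_ne_zero_of_finrank_range (A X₀)
  have hdet : Continuous fun X => (Matrix.of fun i j => A X (e i) (f j)).det :=
    (continuous_matrix fun i j => hcont (e i) (f j)).matrix_det
  filter_upwards [hdet.continuousAt.eventually_ne hdet₀] with X hX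
  exact mem_maximalRankSet_of_det_ne_zero hX₀ hX

lemma dense_maximalRankSet [TopologicalSpace K] [IsTopologicalRing K] [T1Space K]
    [∀ x : K, (𝓝[≠] x).NeBot] [AddCommGroup V] [Module K V] [TopologicalSpace V]
    [IsTopologicalAddGroup V] [ContinuousSMul K V] {A : V → E →ₗ[K] Dual K F}
    (hfin : ∀ X, FiniteDimensional K (LinearMap.range (A X)))
    (hpoly : ∀ e f, (fun X => A X e f) ∈ polynomialOnLines K V)
    (hne : (maximalRankSet A).Nonempty) : Dense (maximalRankSet A) := by
  obtain ⟨X₀, hX₀⟩ := hne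
  obtain ⟨e, f, hdet₀⟩ := exists_det_ne_zero_of_finrank_range (A X₀)
  have hdet : (fun X => (Matrix.of fun i j => A X (e i) (f j)).det) ∈ polynomialOnLines K V :=
    det_mem_subalgebra _ fun i j => hpoly (e i) (f j)
  exact (dense_setOf_ne_zero_of_mem_polynomialOnLines hdet hdet₀).mono fun X hX =>
    mem_maximalRankSet_of_det_ne_zero hX₀ hX

/-- The parameters `X` of maximal rank at which the radical of `B` on the range of `A X` has
minimal dimension; for the family `X ↦ β(X)` this is `RE*(β)`. -/
def minimalRadicalSet (B : LinearMap.BilinForm K W) (A : V → E →ₗ[K] W) : Set V :=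
  {X | X ∈ maximalRankSet A ∧ ∀ Y ∈ maximalRankSet A,
    finrank K (rangeRadical B (A X)) ≤ finrank K (rangeRadical B (A Y))}

lemma minimalRadicalSet_eq_inter (B : LinearMap.BilinForm K W) {A : V → E →ₗ[K] W}
    (hfin : ∀ X, FiniteDimensional K (LinearMap.range (A X)))
    (hne : (maximalRankSet A ∩ maximalRankSet fun X => gramForm B (A X)).Nonempty) :
    minimalRadicalSet B A = maximalRankSet A ∩ maximalRankSet fun X => gramForm B (A X) := by
  obtain ⟨Y, hYA, hYG⟩ := hne
  have hsum X := finrank_range_gramForm_add_finrank_rangeRadical B (A X)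
  ext X
  refine and_congr_right fun hX => ⟨fun hmin => ?_, fun hmax Z hZ => ?_⟩
  · have hrank : finrank K (LinearMap.range (gramForm B (A Y))) ≤
        finrank K (LinearMap.range (gramForm B (A X))) := by
      linarith [hmin Y hYA, hX Y, hsum X, hsum Y]
    exact fun Z => (hYG Z).trans hrank
  · have hrank : finrank K (LinearMap.range (gramForm B (A Z))) ≤
        finrank K (LinearMap.range (gramForm B (A X))) := hmax Z
    linarith [hZ X, hsum X, hsum Z]

end MaximalRank

theorem statement2_general {K V E W : Type*} [Field K] [TopologicalSpace K] [IsTopologicalRing K]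
    [T1Space K] [∀ x : K, (𝓝[≠] x).NeBot] [AddCommGroup V] [Module K V] [TopologicalSpace V]
    [IsTopologicalAddGroup V] [ContinuousSMul K V] [AddCommGroup E] [Module K E] [AddCommGroup W]
    [Module K W] [FiniteDimensional K W] (B : LinearMap.BilinForm K W) (A : V → E →ₗ[K] W)
    (hcont : ∀ (φ : Dual K W) e, Continuous fun X => φ (A X e))
    (hpoly : ∀ (φ : Dual K W) e, (fun X => φ (A X e)) ∈ polynomialOnLines K V) :
    IsOpen (minimalRadicalSet B A) ∧ Dense (minimalRadicalSet B A) := by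
  have hfin X : FiniteDimensional K (LinearMap.range (gramForm B (A X))) := by
    rw [gramForm, LinearMap.range_comp]
    infer_instance
  have hcontGram u v : Continuous fun X => gramForm B (A X) u v :=
    bilinForm_apply_mem_subalgebra continuousSubalgebra B (hcont · v) (hcont · u)
  have hpolyGram u v : (fun X => gramForm B (A X) u v) ∈ polynomialOnLines K V :=
    bilinForm_apply_mem_subalgebra _ B (hpoly · v) (hpoly · u)
  have hneA : (maximalRankSet A).Nonempty := maximalRankSet_nonempty fun X => finrank_le _
  have hneG : (maximalRankSet fun X => gramForm B (A X)).Nonempty :=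
    maximalRankSet_nonempty fun X => Nat.le_of_add_right_le
      ((finrank_range_gramForm_add_finrank_rangeRadical B (A X)).trans_le (finrank_le _))
  -- Composing with `Dual.eval` turns `A X` into the pairing `(e, φ) ↦ φ (A X e)`.
  have hopenA : IsOpen (maximalRankSet A) := by
    rw [← maximalRankSet_comp_of_injective (eval_apply_injective K)]
    exact isOpen_maximalRankSet (fun X => inferInstance) fun e φ => hcont φ e
  have hdenseA : Dense (maximalRankSet A) := by
    rw [← maximalRankSet_comp_of_injective (eval_apply_injective K)] at hneA ⊢
    exact dense_maximalRankSet (fun X => inferInstance) (fun e φ => hpoly φ e) hneA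
  have hopenG : IsOpen (maximalRankSet fun X => gramForm B (A X)) :=
    isOpen_maximalRankSet hfin hcontGram
  have hdense := hdenseA.inter_of_isOpen_left (dense_maximalRankSet hfin hpolyGram hneG) hopenA
  rw [minimalRadicalSet_eq_inter B (fun X => inferInstance) hdense.nonempty]
  exact ⟨hopenA.inter hopenG, hdense⟩

/-- Lemma 2.2, first part. For a flat symmetric bilinear map
`β : V × V → W` into a finite-dimensional space `W` with a nondegenerate symmetric bilinear
form, the set `RE*(β)` of regular elements `X` for which `dim U(X)` is minimal among regular
elements is open and dense in `V`. Here `X` is regular if `dim β(X,V)` is maximal, and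
`U(X) = β(X,V) ∩ β(X,V)⊥`. -/
theorem statement2 {V W : Type*} [NormedAddCommGroup V] [NormedSpace ℝ V]
    [FiniteDimensional ℝ V] [AddCommGroup W] [Module ℝ W] [FiniteDimensional ℝ W]
    (B : LinearMap.BilinForm ℝ W) (hBsymm : ∀ x y, B x y = B y x) (hBnd : B.Nondegenerate)
    (β : V →ₗ[ℝ] V →ₗ[ℝ] W) (hsymm : ∀ X Y, β X Y = β Y X)
    (hflat : ∀ X Y Z U, B (β X Y) (β Z U) = B (β X U) (β Y Z))
    (RE : Set V)
    (hRE : RE = {X | ∀ Z, finrank ℝ (LinearMap.range (β Z)) ≤ finrank ℝ (LinearMap.range (β X))})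
    (U : V → Submodule ℝ W)
    (hU : ∀ X, U X = LinearMap.range (β X) ⊓ B.orthogonal (LinearMap.range (β X)))
    (REstar : Set V)
    (hREstar : REstar = {X | X ∈ RE ∧ ∀ Y ∈ RE, finrank ℝ (U X) ≤ finrank ℝ (U Y)}) :
    IsOpen REstar ∧ Dense REstar := by
  obtain rfl : U = fun X => rangeRadical B (β X) := funext hU
  subst hRE hREstar
  exact statement2_general B β (fun φ e => (φ ∘ₗ β.flip e).continuous_of_finiteDimensional)
    fun φ e => dual_mem_polynomialOnLines (φ ∘ₗ β.flip e)
end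

section
/- Let d ≤ 5 and n > 2d + 3 be integers. Let V be an n-dimensional real vector space and W a (2d+3)-dimensional real vector space with a nondegenerate symmetric bilinear form of type (d+1, d+2). Let β : V × V → W be a flat symmetric bilinear map with β(X,X) ≠ 0 for every X ≠ 0. Then ℓ := dim(S(β) ∩ S(β)⊥) ≥ 1, and there exist an orthogonal direct sum decomposition W = W₁ ⊕ W₂ in which the form is of type (ℓ, ℓ) on W₁ and of type (d−ℓ+1, d−ℓ+2) on W₂, together with symmetric bilinear maps ω₁ : V × V → W₁ and ω₂ : V × V → W₂ with β = ω₁ + ω₂, such that: (i) ω₁ is nonzero and null, i.e. ⟨ω₁(X,Y), ω₁(Z,U)⟩ = 0 for all X, Y, Z, U ∈ V; and (ii) ω₂ is flat with dim N(ω₂) ≥ n − dim W₂. -/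
open Module Submodule

/-- A nondegenerate symmetric bilinear form `B` on `W` has type `(r, q)` if `W` has an
orthogonal basis consisting of `r` vectors of negative square length and `q` vectors of
positive square length. -/
def BilinFormHasType {W : Type*} [AddCommGroup W] [Module ℝ W]
    (B : LinearMap.BilinForm ℝ W) (r q : ℕ) : Prop :=
  ∃ b : Basis (Fin r ⊕ Fin q) ℝ W,
    (∀ i j, i ≠ j → B (b i) (b j) = 0) ∧
    (∀ i, B (b (Sum.inl i)) (b (Sum.inl i)) < 0) ∧
    (∀ j, 0 < B (b (Sum.inr j)) (b (Sum.inr j)))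

/-!
Call `X` regular if `β X` has maximal rank. At a regular point every `β Y` sends `ker (β X)` into
the range of `β X`, so flatness makes the values `β Y n` with `n ∈ ker (β X)` isotropic and mutually
orthogonal. As `dim V > dim W` this kernel contains some `n ≠ 0`, and then `β n n ≠ 0` lies in the
radical `S(β) ∩ S(β)⊥`. A Witt decomposition `W = W₁ ⊕ W₂` with the radical as a Lagrangian of `W₁`
splits off the null part `ω₁`, and the component `ω₂` in `W₂` is flat with trivial radical.

Now let `β` be flat with trivial radical, and suppose `dim V > dim N(β) + dim W`. For any `X, Y` the
space `ker (β X) ∩ ker (β Y)` has codimension at most `dim W`, so it is not contained in `N(β)`, and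
for generic `Z` it contains `n` with `⟨β Z Z, β Z n⟩ ≠ 0`. If `(X, Y)` is regular for the pencil
`(β X, β Y)`, there is moreover `m ∈ ker (β X)` with `β Y m = β Z n`. Doing this for the three
cyclic rotations of a generic triple `x₀, x₁, x₂` yields six vectors `β xₖ nₖ`, `β xₖ mₖ` which are
linearly independent and span a totally isotropic subspace. Applied to `ω₂`, this is impossible:
the form on `W₂` has type `(r - ℓ, q - ℓ)` with `min r q - ℓ ≤ 5`.
-/

section Generic

variable {K E E' : Type*} [Field K] [AddCommGroup E] [Module K E] [AddCommGroup E'] [Module K E']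

/-- A function on a vector space which restricts to a polynomial on every line. This is all that is
needed of polynomial functions, and it makes sense without choosing coordinates. -/
def IsPolynomialOnLines (p : E → K) : Prop :=
  ∀ x y : E, ∃ q : Polynomial K, ∀ t : K, p (x + t • y) = q.eval t

namespace IsPolynomialOnLines

lemma linearMap_add_const (f : E →ₗ[K] K) (c : K) : IsPolynomialOnLines fun x => f x + c :=
  fun x y => ⟨.C (f y) * .X + .C (f x + c), fun t => by simp; ring⟩

lemma linearMap (f : E →ₗ[K] K) : IsPolynomialOnLines fun x => f x := by
  simpa using linearMap_add_const f 0

lemma add {p q : E → K} (hp : IsPolynomialOnLines p) (hq : IsPolynomialOnLines q) :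
    IsPolynomialOnLines fun x => p x + q x := fun x y => by
  obtain ⟨a, ha⟩ := hp x y
  obtain ⟨b, hb⟩ := hq x y
  exact ⟨a + b, by simp [ha, hb]⟩

lemma mul {p q : E → K} (hp : IsPolynomialOnLines p) (hq : IsPolynomialOnLines q) :
    IsPolynomialOnLines fun x => p x * q x := fun x y => by
  obtain ⟨a, ha⟩ := hp x y
  obtain ⟨b, hb⟩ := hq x y
  exact ⟨a * b, by simp [ha, hb]⟩

lemma mul_const {p : E → K} (hp : IsPolynomialOnLines p) (c : K) :
    IsPolynomialOnLines fun x => p x * c := fun x y => by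
  obtain ⟨a, ha⟩ := hp x y
  exact ⟨a * .C c, by simp [ha]⟩

lemma comp_linearMap {p : E' → K} (hp : IsPolynomialOnLines p) (f : E →ₗ[K] E') :
    IsPolynomialOnLines fun x => p (f x) := fun x y => by
  simpa only [map_add, map_smul] using hp (f x) (f y)

lemma det {ι : Type*} [Fintype ι] [DecidableEq ι] {M : E → Matrix ι ι K}
    (hM : ∀ i j, IsPolynomialOnLines fun x => M x i j) :
    IsPolynomialOnLines fun x => (M x).det := fun x y => by
  choose q hq using fun i j => hM i j x y
  refine ⟨(Matrix.of q).det, fun t => ?_⟩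
  rw [← Polynomial.coe_evalRingHom, RingHom.map_det]
  refine congrArg Matrix.det (Matrix.ext fun i j => ?_)
  simp [hq]

lemma exists_ne_zero_and_ne_zero [Infinite K] {p q : E → K} (hp : IsPolynomialOnLines p)
    (hq : IsPolynomialOnLines q) {x y : E} (hx : p x ≠ 0) (hy : q y ≠ 0) :
    ∃ z, p z ≠ 0 ∧ q z ≠ 0 := by
  obtain ⟨a, ha⟩ := hp x (y - x)
  obtain ⟨b, hb⟩ := hq x (y - x)
  have ha0 : a ≠ 0 := by
    rintro rfl
    exact hx (by simpa using ha 0)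
  have hb0 : b ≠ 0 := by
    rintro rfl
    exact hy (by simpa using hb 1)
  obtain ⟨t, ht⟩ : ∃ t, (a * b).eval t ≠ 0 := by
    by_contra! h
    exact mul_ne_zero ha0 hb0 (Polynomial.zero_of_eval_zero _ h)
  rw [Polynomial.eval_mul, ← ha, ← hb] at ht
  exact ⟨_, left_ne_zero_of_mul ht, right_ne_zero_of_mul ht⟩

end IsPolynomialOnLines

variable (K) in
/-- A property which holds outside the zero set of a function that is polynomial on lines and does
not vanish identically. -/
def IsGeneric (P : E → Prop) : Prop :=
  ∃ p : E → K, IsPolynomialOnLines p ∧ (∃ x, p x ≠ 0) ∧ ∀ x, p x ≠ 0 → P x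

namespace IsGeneric

lemma exists_apply {P : E → Prop} (hP : IsGeneric K P) : ∃ x, P x :=
  let ⟨_, _, ⟨x, hx⟩, h⟩ := hP
  ⟨x, h x hx⟩

lemma and [Infinite K] {P Q : E → Prop} (hP : IsGeneric K P) (hQ : IsGeneric K Q) :
    IsGeneric K fun x => P x ∧ Q x := by
  obtain ⟨p, hp, ⟨x, hx⟩, hpP⟩ := hP
  obtain ⟨q, hq, ⟨y, hy⟩, hqQ⟩ := hQ
  obtain ⟨z, hpz, hqz⟩ := hp.exists_ne_zero_and_ne_zero hq hx hy
  exact ⟨_, hp.mul hq, ⟨z, mul_ne_zero hpz hqz⟩,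
    fun x hx => ⟨hpP x (left_ne_zero_of_mul hx), hqQ x (right_ne_zero_of_mul hx)⟩⟩

lemma forall_fin [Infinite K] {k : ℕ} {P : Fin k → E → Prop} (hP : ∀ i, IsGeneric K (P i)) :
    IsGeneric K fun x => ∀ i, P i x := by
  induction k with
  | zero =>
    exact ⟨fun _ => 1, by simpa using IsPolynomialOnLines.linearMap_add_const (0 : E →ₗ[K] K) 1,
      ⟨0, one_ne_zero⟩, fun _ _ i => i.elim0⟩
  | succ k ih =>
    simpa only [Fin.forall_fin_succ] using (hP 0).and (ih fun i => hP i.succ)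

lemma comp_surjective {P : E' → Prop} (hP : IsGeneric K P) {f : E →ₗ[K] E'}
    (hf : Function.Surjective f) : IsGeneric K fun x => P (f x) := by
  obtain ⟨p, hp, ⟨y, hy⟩, hpP⟩ := hP
  obtain ⟨x, rfl⟩ := hf y
  exact ⟨_, hp.comp_linearMap f, ⟨x, hy⟩, fun x hx => hpP _ hx⟩

end IsGeneric

lemma isGeneric_ne_zero : IsGeneric K fun t : K => t ≠ 0 :=
  ⟨_, .linearMap .id, ⟨1, one_ne_zero⟩, fun _ => id⟩

end Generic

section Regular

variable {K E V F ι : Type*} [Field K] [AddCommGroup V] [Module K V] [FiniteDimensional K V]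
  [AddCommGroup F] [Module K F]

lemma exists_linearMap_apply_eq_single [DecidableEq ι] {v : ι → F}
    (hv : LinearIndependent K v) : ∃ g : F →ₗ[K] (ι → K), ∀ i, g (v i) = Pi.single i 1 := by
  obtain ⟨g, hg⟩ :=
    (Finsupp.linearCombination K v).exists_leftInverse_of_injective (LinearMap.ker_eq_bot.2 hv)
  refine ⟨Finsupp.lcoeFun ∘ₗ g, fun i => ?_⟩
  have hgi : g (v i) = Finsupp.single i 1 := by
    simpa using LinearMap.congr_fun hg (Finsupp.single i 1)
  simp [hgi, Finsupp.single_eq_pi_single]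

lemma exists_linearIndependent_apply (L : V →ₗ[K] F) :
    ∃ v : Fin (finrank K (LinearMap.range L)) → V, LinearIndependent K fun i => L (v i) := by
  let b := finBasis K (LinearMap.range L)
  choose v hv using fun i => (b i).2
  refine ⟨v, ?_⟩
  simp only [hv]
  exact b.linearIndependent.map' _ (LinearMap.range L).ker_subtype

lemma card_le_finrank_range [Fintype ι] {L : V →ₗ[K] F} {v : ι → V}
    (hv : LinearIndependent K fun i => L (v i)) :
    Fintype.card ι ≤ finrank K (LinearMap.range L) :=
  (LinearIndependent.of_comp (v := fun i => L.rangeRestrict (v i)) (LinearMap.range L).subtype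
    hv).fintype_card_le_finrank

/-- A parameter at which a family of linear maps attains its maximal rank. For the family
`X ↦ β X` of a bilinear map these are the regular elements of `β`. -/
def IsRegularPoint (M : E → V →ₗ[K] F) (x : E) : Prop :=
  ∀ y, finrank K (LinearMap.range (M y)) ≤ finrank K (LinearMap.range (M x))

lemma exists_isRegularPoint [Nonempty E] (M : E → V →ₗ[K] F) : ∃ x, IsRegularPoint M x := by
  have hbdd : BddAbove (Set.range fun y => finrank K (LinearMap.range (M y))) :=
    ⟨finrank K V, Set.forall_mem_range.2 fun y => (M y).finrank_range_le⟩
  obtain ⟨x, hx⟩ := Nat.sSup_mem (Set.range_nonempty _) hbdd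
  exact ⟨x, fun y => (le_csSup hbdd ⟨y, rfl⟩).trans_eq hx.symm⟩

variable [AddCommGroup E] [Module K E]

lemma isGeneric_isRegularPoint {M : E → V →ₗ[K] F}
    (hM : ∀ (φ : F →ₗ[K] K) (v : V), IsPolynomialOnLines fun x => φ (M x v)) :
    IsGeneric K (IsRegularPoint M) := by
  obtain ⟨x₀, hx₀⟩ := exists_isRegularPoint M
  obtain ⟨v, hv⟩ := exists_linearIndependent_apply (M x₀)
  obtain ⟨g, hg⟩ := exists_linearMap_apply_eq_single hv
  refine ⟨fun x => (Matrix.of fun i => g (M x (v i))).det,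
    .det fun i j => hM (LinearMap.proj j ∘ₗ g) (v i), ⟨x₀, ?_⟩, fun x hx y => (hx₀ y).trans ?_⟩
  · have : (Matrix.of fun i => g (M x₀ (v i))) = 1 := by
      ext i j
      simp [hg, Matrix.one_apply, Pi.single_apply, eq_comm]
    simp [this]
  · simpa using card_le_finrank_range
      (LinearIndependent.of_comp g (Matrix.linearIndependent_rows_of_det_ne_zero hx))

lemma isGeneric_isRegularPoint_linearMap (M : E →ₗ[K] V →ₗ[K] F) :
    IsGeneric K (IsRegularPoint M) :=
  isGeneric_isRegularPoint fun φ v => .linearMap (φ ∘ₗ M.flip v)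

/-- If `M y n` were not in the range of `M x`, adjoining it to the maps `M (x + t • y)` would raise
the rank at `t = 0`, hence at some `t ≠ 0`, where `t • M y n = M (x + t • y) n` is already in the
range. -/
lemma IsRegularPoint.apply_mem_range [Infinite K] {M : E →ₗ[K] V →ₗ[K] F} {x : E}
    (hx : IsRegularPoint M x) {n : V} (hn : M x n = 0) (y : E) :
    M y n ∈ LinearMap.range (M x) := by
  by_contra hmem
  let N : K → V × K →ₗ[K] F :=
    fun t => (M (x + t • y)).coprod (LinearMap.toSpanSingleton K F (M y n))
  have range_N (t : K) : LinearMap.range (N t) =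
      LinearMap.range (M (x + t • y)) ⊔ span K {M y n} := by
    rw [LinearMap.range_coprod, LinearMap.range_toSpanSingleton]
  have hN : IsGeneric K (IsRegularPoint N) := isGeneric_isRegularPoint fun φ v => by
    convert! IsPolynomialOnLines.linearMap_add_const
      (LinearMap.toSpanSingleton K K (φ (M y v.1))) (φ (M x v.1 + v.2 • M y n)) using 2 with t
    simp [N]
    ring
  obtain ⟨t, htN, ht⟩ := (hN.and isGeneric_ne_zero).exists_apply
  have hmem_t : M y n ∈ LinearMap.range (M (x + t • y)) :=
    ⟨t⁻¹ • n, by simp [hn, smul_smul, ht]⟩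
  have hlt : finrank K (LinearMap.range (M x)) < finrank K (LinearMap.range (N 0)) := by
    apply Submodule.finrank_lt_finrank_of_lt
    rw [range_N, zero_smul, add_zero, left_lt_sup, span_singleton_le_iff_mem]
    exact hmem
  have hle : finrank K (LinearMap.range (N t)) ≤ finrank K (LinearMap.range (M x)) := by
    rw [range_N, sup_eq_left.2 ((span_singleton_le_iff_mem _ _).2 hmem_t)]
    exact hx _
  exact absurd (htN 0) (by lia)

end Regular

section LinearAlgebra

variable {K V F G : Type*} [Field K] [AddCommGroup V] [Module K V] [FiniteDimensional K V]
  [AddCommGroup F] [Module K F] [AddCommGroup G] [Module K G]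

lemma ker_le_ker_of_finrank_range_prod_le {A : V →ₗ[K] F} {f g : V →ₗ[K] G}
    (hfg : finrank K (LinearMap.range (A.prod f)) ≤ finrank K (LinearMap.range (A.prod g)))
    (hg : LinearMap.ker A ≤ LinearMap.ker g) : LinearMap.ker A ≤ LinearMap.ker f := by
  have hker_f : LinearMap.ker (A.prod f) = LinearMap.ker A ⊓ LinearMap.ker f :=
    LinearMap.ker_prod ..
  have hker_g : LinearMap.ker (A.prod g) = LinearMap.ker A := by
    rw [LinearMap.ker_prod, inf_eq_left.2 hg]
  have hrank_f := (A.prod f).finrank_range_add_finrank_ker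
  have hrank_g := (A.prod g).finrank_range_add_finrank_ker
  rw [hker_f] at hrank_f
  rw [hker_g] at hrank_g
  exact inf_eq_left.1 (Submodule.eq_of_le_of_finrank_le inf_le_left (by lia))

omit [FiniteDimensional K V] in
lemma linearIndependent_sumElim_of_dual {ι κ : Type*} [Finite ι] [Finite κ] {a : ι → V} {b : κ → V}
    {φ : ι → V →ₗ[K] K} {ψ : κ → V →ₗ[K] K}
    (hφ : ∀ i, φ i (a i) ≠ 0) (hφ' : ∀ i j, i ≠ j → φ i (a j) = 0)
    (hψ : ∀ i, ψ i (b i) ≠ 0) (hψ' : ∀ i j, i ≠ j → ψ i (b j) = 0)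
    (hψa : ∀ i j, ψ i (a j) = 0) : LinearIndependent K (Sum.elim a b) := by
  have := Fintype.ofFinite ι
  have := Fintype.ofFinite κ
  classical
  rw [Fintype.linearIndependent_iff]
  intro c hc
  simp only [Fintype.sum_sum_type, Sum.elim_inl, Sum.elim_inr] at hc
  have hcb (k : κ) : c (.inr k) = 0 := by
    have h := congrArg (ψ k) hc
    simp only [map_add, map_sum, map_smul, hψa, smul_zero, Finset.sum_const_zero, zero_add,
      map_zero] at h
    rw [Fintype.sum_eq_single k fun j hj => by rw [hψ' k j hj.symm, smul_zero]] at h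
    exact (smul_eq_zero.1 h).resolve_right (hψ k)
  have hca (i : ι) : c (.inl i) = 0 := by
    have h := congrArg (φ i) hc
    simp only [hcb, zero_smul, Finset.sum_const_zero, add_zero, map_sum, map_smul, map_zero] at h
    rw [Fintype.sum_eq_single i fun j hj => by rw [hφ' i j hj.symm, smul_zero]] at h
    exact (smul_eq_zero.1 h).resolve_right (hφ i)
  exact Sum.rec hca hcb

end LinearAlgebra

lemma span_range_le_orthogonal {K W ι : Type*} [CommRing K] [AddCommGroup W] [Module K W]
    {B : LinearMap.BilinForm K W} {u : ι → W} (hu : ∀ i j, B (u i) (u j) = 0) :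
    span K (Set.range u) ≤ B.orthogonal (span K (Set.range u)) := by
  rw [span_le]
  rintro _ ⟨j, rfl⟩
  have hle : span K (Set.range u) ≤ LinearMap.ker (B.flip (u j)) :=
    span_le.2 (Set.range_subset_iff.2 fun i => hu i j)
  exact hle

section Flat

variable {K V W : Type*} [Field K] [AddCommGroup V] [Module K V] [AddCommGroup W] [Module K W]
  {B : LinearMap.BilinForm K W} {β : V →ₗ[K] V →ₗ[K] W}

/-- A symmetric bilinear map which is flat with respect to `B`. Together the two conditions say that
the quartic form `B (β X Y) (β Z U)` is totally symmetric. -/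
structure IsFlatSymm (B : LinearMap.BilinForm K W) (β : V →ₗ[K] V →ₗ[K] W) : Prop where
  symm : ∀ X Y, β X Y = β Y X
  flat : ∀ X Y Z U, B (β X Y) (β Z U) = B (β X U) (β Y Z)

/-- The span `S(β)` of the values of a bilinear map `β`. -/
def imageSpan (β : V →ₗ[K] V →ₗ[K] W) : Submodule K W := span K {w | ∃ X Y, β X Y = w}

/-- The radical `S(β) ∩ S(β)⊥` of the span of the values of `β`. -/
def imageRadical (B : LinearMap.BilinForm K W) (β : V →ₗ[K] V →ₗ[K] W) : Submodule K W :=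
  imageSpan β ⊓ B.orthogonal (imageSpan β)

/-- The pencil `(X, Y) ↦ (Z ↦ (β X Z, β Y Z))`; its regular points are the pairs `(X, Y)` for which
`ker (β X) ∩ ker (β Y)` has minimal dimension. -/
def pairMap (β : V →ₗ[K] V →ₗ[K] W) : V × V →ₗ[K] V →ₗ[K] W × W :=
  (LinearMap.prodEquiv K).toLinearMap ∘ₗ β.prodMap β

/-- The functional `T ↦ B (β Z Z) (β Z T)`. For flat symmetric `β` it is a quarter of the derivative
at `Z` of the quartic form `B (β Z Z) (β Z Z)`. -/
def cubicFunctional (B : LinearMap.BilinForm K W) (β : V →ₗ[K] V →ₗ[K] W) (Z : V) : V →ₗ[K] K :=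
  B (β Z Z) ∘ₗ β Z

lemma apply_mem_imageSpan (β : V →ₗ[K] V →ₗ[K] W) (X Y : V) : β X Y ∈ imageSpan β :=
  subset_span ⟨X, Y, rfl⟩

lemma imageSpan_le_iff {S : Submodule K W} : imageSpan β ≤ S ↔ ∀ X Y, β X Y ∈ S := by
  rw [imageSpan, span_le]
  exact ⟨fun h X Y => h ⟨X, Y, rfl⟩, fun h w ⟨X, Y, hw⟩ => hw ▸ h X Y⟩

lemma mem_orthogonal_imageSpan_iff {w : W} :
    w ∈ B.orthogonal (imageSpan β) ↔ ∀ X Y, B (β X Y) w = 0 :=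
  imageSpan_le_iff (S := LinearMap.ker (B.flip w))

lemma pairMap_apply (X Y Z : V) : pairMap β (X, Y) Z = (β X Z, β Y Z) := rfl

lemma cubicFunctional_apply (Z T : V) : cubicFunctional B β Z T = B (β Z Z) (β Z T) := rfl

lemma isPolynomialOnLines_cubicFunctional (T : V) :
    IsPolynomialOnLines fun Z => cubicFunctional B β Z T := fun x y => by
  let b (c d e : V) : Polynomial K := .C (B (β c d) (β e T))
  refine ⟨b x x x + (b x x y + b x y x + b y x x) * .X + (b x y y + b y x y + b y y x) * .X ^ 2 +
    b y y y * .X ^ 3, fun t => ?_⟩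
  simp only [b, cubicFunctional_apply, map_add, map_smul, LinearMap.add_apply, LinearMap.smul_apply,
    smul_eq_mul, Polynomial.eval_add, Polynomial.eval_mul, Polynomial.eval_pow, Polynomial.eval_C,
    Polynomial.eval_X]
  ring

lemma isGeneric_isRegularPoint_pairMap_prod_cubicFunctional [FiniteDimensional K V] :
    IsGeneric K (IsRegularPoint fun p : (V × V) × V =>
      (pairMap β p.1).prod (cubicFunctional B β p.2)) := by
  refine isGeneric_isRegularPoint fun φ T => ?_
  have hφ (p : (V × V) × V) : φ ((pairMap β p.1).prod (cubicFunctional B β p.2) T) =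
      φ (pairMap β p.1 T, 0) + cubicFunctional B β p.2 T * φ (0, 1) := by
    rw [← smul_eq_mul, ← map_smul, ← map_add]
    simp
  simp only [hφ]
  exact .add
    (.linearMap (φ ∘ₗ .inl K (W × W) K ∘ₗ (pairMap β).flip T ∘ₗ .fst K (V × V) V))
    (.mul_const ((isPolynomialOnLines_cubicFunctional T).comp_linearMap (.snd K (V × V) V)) _)

namespace IsFlatSymm

variable (h : IsFlatSymm B β)
include h

lemma swap (X Y Z U : V) : B (β X Y) (β Z U) = B (β X U) (β Z Y) := by
  rw [h.flat X Y Z U, h.symm Y Z]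

lemma apply_eq_zero_of_left {X U : V} (hXU : β X U = 0) (Y Z : V) :
    B (β X Y) (β Z U) = 0 := by
  rw [h.swap, hXU, map_zero, LinearMap.zero_apply]

lemma apply_eq_zero_of_right {Y Z : V} (hZY : β Z Y = 0) (X U : V) :
    B (β X Y) (β Z U) = 0 := by
  rw [h.swap, hZY, map_zero]

lemma apply_eq_zero_of_isRegularPoint [Infinite K] [FiniteDimensional K V] {X : V}
    (hX : IsRegularPoint β X) {n m : V} (hn : β X n = 0) (hm : β X m = 0) (Y Z : V) :
    B (β Y n) (β Z m) = 0 := by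
  obtain ⟨T, hT⟩ := hX.apply_mem_range hm Z
  rw [← hT]
  exact h.apply_eq_zero_of_right hn Y T

lemma imageRadical_ne_bot [Infinite K] [FiniteDimensional K V] [FiniteDimensional K W]
    (hVW : finrank K W < finrank K V) (hne : ∀ X, X ≠ 0 → β X X ≠ 0) : imageRadical B β ≠ ⊥ := by
  obtain ⟨X, hX⟩ := exists_isRegularPoint β
  obtain ⟨n, hn, hn0⟩ := (Submodule.ne_bot_iff _).1 ((β X).ker_ne_bot_of_finrank_lt hVW)
  have horth : β n n ∈ B.orthogonal (imageSpan β) := mem_orthogonal_imageSpan_iff.2 fun Y Z => by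
    rw [h.flat]
    exact h.apply_eq_zero_of_isRegularPoint hX hn hn Y Z
  exact (Submodule.ne_bot_iff _).2 ⟨β n n, ⟨apply_mem_imageSpan β n n, horth⟩, hne n hn0⟩

lemma finrank_le_finrank_ker_inf_ker_add [FiniteDimensional K V] [FiniteDimensional K W]
    (hB : B.Nondegenerate) (X Y : V) :
    finrank K V ≤ finrank K (LinearMap.ker (β X) ⊓ LinearMap.ker (β Y) : Submodule K V) +
      finrank K W := by
  let f := (β Y).domRestrict (LinearMap.ker (β X))
  have hker : (LinearMap.ker f).map (LinearMap.ker (β X)).subtype =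
      LinearMap.ker (β X) ⊓ LinearMap.ker (β Y) := by
    rw [LinearMap.ker_domRestrict, map_comap_subtype]
  have hrange : LinearMap.range f ≤ B.orthogonal (LinearMap.range (β X)) := by
    rintro _ ⟨⟨n, hn⟩, rfl⟩ _ ⟨T, rfl⟩
    exact h.apply_eq_zero_of_left hn T Y
  have hrank_f := f.finrank_range_add_finrank_ker
  have hrank_X := (β X).finrank_range_add_finrank_ker
  have hle := Submodule.finrank_mono hrange
  have horth := LinearMap.BilinForm.finrank_orthogonal hB (LinearMap.range (β X))
  have hrange_le := (LinearMap.range (β X)).finrank_le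
  rw [← hker, finrank_map_subtype_eq]
  lia

lemma apply_eq_zero_of_cubicFunctional_eq_zero [CharZero K] {n : V}
    (hn : ∀ T, cubicFunctional B β T n = 0) (X Y Z : V) : B (β X Y) (β Z n) = 0 := by
  let g (X Y Z : V) := B (β X Y) (β Z n)
  have g_comm_left (X Y Z : V) : g X Y Z = g Y X Z := by simp only [g, h.symm X Y]
  have g_comm_right (X Y Z : V) : g X Y Z = g X Z Y := by
    simp only [g]
    rw [h.symm Z n, h.swap, h.symm n Y]
  have hperm : g X Y Z + g X Z Y + g Y X Z + g Y Z X + g Z X Y + g Z Y X = 0 := by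
    have hXYZ := hn (X + Y + Z)
    have hXY := hn (X + Y)
    have hXZ := hn (X + Z)
    have hYZ := hn (Y + Z)
    simp only [cubicFunctional_apply, map_add, LinearMap.add_apply] at hXYZ hXY hXZ hYZ
    have hX := hn X
    have hY := hn Y
    have hZ := hn Z
    simp only [cubicFunctional_apply] at hX hY hZ
    linear_combination hXYZ - hXY - hXZ - hYZ + hX + hY + hZ
  have hsix : 6 * g X Y Z = 0 := by
    linear_combination hperm + g_comm_right X Y Z + g_comm_left X Y Z +
      (g_comm_left X Y Z + g_comm_right Y X Z) + (g_comm_right X Y Z + g_comm_left X Z Y) +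
      (g_comm_right X Y Z + g_comm_left X Z Y + g_comm_right Z X Y)
  exact (mul_eq_zero.1 hsix).resolve_left (by norm_num)

lemma exists_cubicFunctional_ne_zero [CharZero K] (hrad : imageRadical B β = ⊥) {n : V}
    (hn : n ∉ LinearMap.ker β) : ∃ Z, cubicFunctional B β Z n ≠ 0 := by
  contrapose! hn
  ext Z
  rw [h.symm]
  have hmem : β Z n ∈ imageRadical B β := ⟨apply_mem_imageSpan β Z n,
    mem_orthogonal_imageSpan_iff.2 fun X Y => h.apply_eq_zero_of_cubicFunctional_eq_zero hn X Y Z⟩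
  simpa [hrad] using hmem

end IsFlatSymm

/-- A triple `(X, Y, Z)` each of whose initial segments is regular: `X` for `β`, `(X, Y)` for the
pencil `pairMap β`, and `(X, Y, Z)` for the pencil extended by `T ↦ B (β Z Z) (β Z T)`. -/
structure IsRegularTriple (B : LinearMap.BilinForm K W) (β : V →ₗ[K] V →ₗ[K] W) (X Y Z : V) :
    Prop where
  left : IsRegularPoint β X
  pair : IsRegularPoint (pairMap β) (X, Y)
  cubic : IsRegularPoint (fun p : (V × V) × V =>
    (pairMap β p.1).prod (cubicFunctional B β p.2)) ((X, Y), Z)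

lemma isGeneric_isRegularTriple [Infinite K] [FiniteDimensional K V] :
    IsGeneric K fun p : (V × V) × V => IsRegularTriple B β p.1.1 p.1.2 p.2 := by
  have hleft := (isGeneric_isRegularPoint_linearMap β).comp_surjective
    (f := .fst K V V ∘ₗ .fst K (V × V) V) (Prod.fst_surjective.comp Prod.fst_surjective)
  have hpair := (isGeneric_isRegularPoint_linearMap (pairMap β)).comp_surjective
    (f := .fst K (V × V) V) Prod.fst_surjective
  obtain ⟨p, hp, hp0, hpP⟩ := (hleft.and hpair).and
    (isGeneric_isRegularPoint_pairMap_prod_cubicFunctional (B := B) (β := β))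
  exact ⟨p, hp, hp0, fun x hx => ⟨(hpP x hx).1.1, (hpP x hx).1.2, (hpP x hx).2⟩⟩

lemma exists_isRegularTriple_cyclic (B : LinearMap.BilinForm K W) (β : V →ₗ[K] V →ₗ[K] W)
    [Infinite K] [FiniteDimensional K V] :
    ∃ x : Fin 3 → V, ∀ k, IsRegularTriple B β (x (k + 2)) (x (k + 1)) (x k) := by
  let f (k : Fin 3) : (Fin 3 → V) →ₗ[K] (V × V) × V :=
    ((LinearMap.proj (k + 2)).prod (LinearMap.proj (k + 1))).prod (LinearMap.proj k)
  have hf (k : Fin 3) : Function.Surjective (f k) := by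
    rintro ⟨⟨X, Y⟩, Z⟩
    refine ⟨Function.update (Function.update (fun _ => X) (k + 1) Y) k Z, ?_⟩
    fin_cases k <;> rfl
  exact (IsGeneric.forall_fin fun k =>
    isGeneric_isRegularTriple.comp_surjective (hf k)).exists_apply

namespace IsFlatSymm

section Cyclic

variable {x n m : Fin 3 → V}

lemma isotropic_of_cyclic [Infinite K] [FiniteDimensional K V] (h : IsFlatSymm B β)
    (hx : ∀ k, IsRegularPoint β (x k)) (hn : ∀ k l, l ≠ k → β (x l) (n k) = 0)
    (hm : ∀ k, β (x (k + 2)) (m k) = 0) (i j : Fin 3 ⊕ Fin 3) :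
    B (Sum.elim (fun k => β (x k) (n k)) (fun k => β (x k) (m k)) i)
      (Sum.elim (fun k => β (x k) (n k)) (fun k => β (x k) (m k)) j) = 0 := by
  have hn' (k : Fin 3) : β (x (k + 2)) (n k) = 0 := hn k _ (by simp)
  have same_index {v w : V} {k : Fin 3} (hv : β (x (k + 2)) v = 0) (hw : β (x (k + 2)) w = 0) :
      B (β (x k) v) (β (x k) w) = 0 :=
    h.apply_eq_zero_of_isRegularPoint (hx (k + 2)) hv hw _ _
  rcases i with k | k <;> rcases j with l | l <;> simp only [Sum.elim_inl, Sum.elim_inr] <;>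
    obtain rfl | hkl := eq_or_ne l k
  · exact same_index (hn' l) (hn' l)
  · exact h.apply_eq_zero_of_right (hn k l hkl) _ _
  · exact same_index (hn' l) (hm l)
  · exact h.apply_eq_zero_of_right (hn k l hkl) _ _
  · exact same_index (hm l) (hn' l)
  · exact h.apply_eq_zero_of_left (hn l k hkl.symm) _ _
  · exact same_index (hm l) (hm l)
  · obtain rfl | rfl : l = k + 2 ∨ k = l + 2 := by lia
    · exact h.apply_eq_zero_of_right (hm k) _ _
    · exact h.apply_eq_zero_of_left (hm l) _ _

lemma linearIndependent_of_cyclic (h : IsFlatSymm B β)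
    (hn : ∀ k l, l ≠ k → β (x l) (n k) = 0) (hm : ∀ k, β (x (k + 2)) (m k) = 0)
    (hnn : ∀ k, B (β (x k) (x k)) (β (x k) (n k)) ≠ 0)
    (hmm : ∀ k, B (β (x k) (x (k + 1))) (β (x k) (m k)) ≠ 0) :
    LinearIndependent K (Sum.elim (fun k => β (x k) (n k)) (fun k => β (x k) (m k))) := by
  have kill_left {X Y Z U : V} (hXU : β X U = 0) : B (β X Y) (β Z U) = 0 :=
    h.apply_eq_zero_of_left hXU Y Z
  have kill_right {X Y Z U : V} (hYU : β Y U = 0) : B (β X Y) (β Z U) = 0 := by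
    rw [h.symm X Y]
    exact kill_left hYU
  refine linearIndependent_sumElim_of_dual (φ := fun k => B (β (x k) (x k)))
    (ψ := fun k => B (β (x k) (x (k + 1)))) hnn (fun l k hlk => kill_left (hn k l hlk)) hmm ?_ ?_
  · intro l k hlk
    obtain rfl | hk : l = k + 2 ∨ l + 1 = k + 2 := by lia
    · exact kill_left (hm k)
    · rw [hk]
      exact kill_right (hm k)
  · intro l k
    obtain rfl | hlk := eq_or_ne l k
    · exact kill_right (hn l (l + 1) (by simp))
    · exact kill_left (hn k l hlk)

end Cyclic

variable [CharZero K] [FiniteDimensional K V] [FiniteDimensional K W]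

lemma exists_mem_ker_of_isRegularTriple (h : IsFlatSymm B β) (hB : B.Nondegenerate)
    (hrad : imageRadical B β = ⊥) (hdim : finrank K (LinearMap.ker β) + finrank K W < finrank K V)
    {X Y Z : V} (hXYZ : IsRegularTriple B β X Y Z) :
    ∃ n m, β X n = 0 ∧ β Y n = 0 ∧ β X m = 0 ∧ β Y m = β Z n ∧ B (β Z Z) (β Z n) ≠ 0 := by
  obtain ⟨n₀, hn₀, hn₀'⟩ :
      ∃ n ∈ LinearMap.ker (β X) ⊓ LinearMap.ker (β Y), n ∉ LinearMap.ker β := by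
    refine SetLike.not_le_iff_exists.1 fun hle => ?_
    have := Submodule.finrank_mono hle
    have := h.finrank_le_finrank_ker_inf_ker_add hB X Y
    lia
  obtain ⟨Z₀, hZ₀⟩ := h.exists_cubicFunctional_ne_zero hrad hn₀'
  have hnot_le : ¬ LinearMap.ker (pairMap β (X, Y)) ≤ LinearMap.ker (cubicFunctional B β Z) :=
    fun hle => hZ₀ (ker_le_ker_of_finrank_range_prod_le (hXYZ.cubic ((X, Y), Z₀)) hle
      (Prod.ext hn₀.1 hn₀.2))
  obtain ⟨n, hn, hnZ⟩ := SetLike.not_le_iff_exists.1 hnot_le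
  have := CharZero.infinite K
  obtain ⟨m, hm⟩ := hXYZ.pair.apply_mem_range hn (0, Z)
  simp only [LinearMap.mem_ker, pairMap_apply, Prod.mk_eq_zero, map_zero, LinearMap.zero_apply,
    Prod.mk.injEq] at hn hm
  exact ⟨n, m, hn.1, hn.2, hm.1, hm.2, hnZ⟩

theorem exists_finrank_eq_six_le_orthogonal (h : IsFlatSymm B β) (hB : B.Nondegenerate)
    (hrad : imageRadical B β = ⊥)
    (hdim : finrank K (LinearMap.ker β) + finrank K W < finrank K V) :
    ∃ L : Submodule K W, finrank K L = 6 ∧ L ≤ B.orthogonal L := by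
  have := CharZero.infinite K
  obtain ⟨x, hx⟩ := exists_isRegularTriple_cyclic B β
  choose n m hn₂ hn₁ hm₂ hm₁ hnn using fun k =>
    h.exists_mem_ker_of_isRegularTriple hB hrad hdim (hx k)
  have hn (k l : Fin 3) (hlk : l ≠ k) : β (x l) (n k) = 0 := by
    obtain rfl | rfl : l = k + 2 ∨ l = k + 1 := by lia
    exacts [hn₂ k, hn₁ k]
  have hmm (k : Fin 3) : B (β (x k) (x (k + 1))) (β (x k) (m k)) ≠ 0 := by
    rw [h.symm (x k) (m k), h.swap, h.symm (m k), hm₁]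
    exact hnn k
  have hreg (k : Fin 3) : IsRegularPoint β (x k) := by
    have hk : k + 1 + 2 = k := by lia
    simpa only [hk] using (hx (k + 1)).left
  refine ⟨_, finrank_span_eq_card (h.linearIndependent_of_cyclic hn hm₂ hnn hmm),
    span_range_le_orthogonal (h.isotropic_of_cyclic hreg hn hm₂)⟩

end IsFlatSymm

end Flat

section HasType

variable {W : Type*} [AddCommGroup W] [Module ℝ W] {B : LinearMap.BilinForm ℝ W} {r q : ℕ}

namespace BilinFormHasType

lemma of_orthogonal_basis {κ ι : Type*} [Fintype κ] [Fintype ι] (b : Basis (κ ⊕ ι) ℝ W)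
    (horth : ∀ i j, i ≠ j → B (b i) (b j) = 0) (hneg : ∀ i, B (b (.inl i)) (b (.inl i)) < 0)
    (hpos : ∀ j, 0 < B (b (.inr j)) (b (.inr j))) :
    BilinFormHasType B (Fintype.card κ) (Fintype.card ι) := by
  refine ⟨b.reindex ((Fintype.equivFin κ).sumCongr (Fintype.equivFin ι)),
    fun i j hij => ?_, fun i => ?_, fun j => ?_⟩
  · simpa only [Basis.reindex_apply] using horth _ _ ((Equiv.injective _).ne hij)
  · simpa using hneg _
  · simpa using hpos _

lemma exists_of_nondegenerate [FiniteDimensional ℝ W] (hB : B.IsSymm) (hBnd : B.Nondegenerate) :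
    ∃ r q, BilinFormHasType B r q := by
  obtain ⟨v, hv⟩ := LinearMap.BilinForm.exists_orthogonal_basis
    (LinearMap.BilinForm.isSymm_iff.1 hB)
  have hne := LinearMap.BilinForm.iIsOrtho.not_isOrtho_basis_self_of_nondegenerate hv hBnd
  let e := Equiv.sumCompl fun i => B (v i) (v i) < 0
  refine ⟨_, _, of_orthogonal_basis (v.reindex e.symm) (fun i j hij => ?_) (fun i => ?_)
    fun j => ?_⟩
  · simpa only [Basis.reindex_apply] using hv (e.symm.symm.injective.ne hij)
  · simpa [e] using i.2
  · simpa [e] using (not_lt.1 j.2).lt_of_ne' (hne j)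

lemma isSymm (h : BilinFormHasType B r q) : B.IsSymm := by
  obtain ⟨b, horth, -⟩ := h
  refine (LinearMap.BilinForm.isSymm_iff_basis b).2 fun i j => ?_
  obtain rfl | hij := eq_or_ne i j
  · rfl
  · rw [horth i j hij, horth j i hij.symm]

lemma nondegenerate (h : BilinFormHasType B r q) : B.Nondegenerate := by
  obtain ⟨b, horth, hneg, hpos⟩ := h
  rw [LinearMap.BilinForm.iIsOrtho.nondegenerate_iff_not_isOrtho_basis_self B b
    fun i j hij => horth i j hij]
  exact Sum.rec (fun i => (hneg i).ne) fun j => (hpos j).ne'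

lemma finrank_eq (h : BilinFormHasType B r q) : finrank ℝ W = r + q := by
  obtain ⟨b, -⟩ := h
  simp [finrank_eq_card_basis b]

lemma sigPos_eq (h : BilinFormHasType B r q) :
    sigPos (LinearMap.BilinMap.toQuadraticMap B) = q := by
  have hassoc : QuadraticMap.associated (LinearMap.BilinMap.toQuadraticMap B) = B :=
    QuadraticMap.associated_left_inverse ℝ h.isSymm.eq
  obtain ⟨b, horth, hneg, hpos⟩ := h
  have hrepr : (LinearMap.BilinMap.toQuadraticMap B).basisRepr b =
      QuadraticMap.weightedSumSquares ℝ fun i => B (b i) (b i) :=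
    QuadraticMap.basisRepr_eq_of_iIsOrtho _ b (by rw [hassoc]; exact fun i j => horth i j)
  have hequiv := hrepr ▸ Nonempty.intro (QuadraticMap.isometryEquivBasisRepr _ b)
  have hset : {i | 0 < B (b i) (b i)} = Set.range Sum.inr := by
    ext (i | j)
    · simpa using (hneg i).le
    · simpa using hpos j
  rw [QuadraticForm.sigPos_of_equiv_weightedSumSquares hequiv, hset,
    Set.ncard_range_of_injective Sum.inr_injective, Nat.card_fin]

lemma neg (h : BilinFormHasType B r q) : BilinFormHasType (-B) q r := by
  obtain ⟨b, horth, hneg, hpos⟩ := h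
  refine ⟨b.reindex (Equiv.sumComm _ _), fun i j hij => ?_, fun i => ?_, fun j => ?_⟩
  · simpa using horth _ _ ((Equiv.sumComm _ _).symm.injective.ne hij)
  · simpa using hpos i
  · simpa using hneg j

lemma unique {r' q' : ℕ} (h : BilinFormHasType B r q) (h' : BilinFormHasType B r' q') :
    r = r' ∧ q = q' := by
  have hq : q = q' := h.sigPos_eq.symm.trans h'.sigPos_eq
  have hrq : r + q = r' + q' := h.finrank_eq.symm.trans h'.finrank_eq
  exact ⟨by lia, hq⟩

lemma finrank_le_left_of_isotropic [FiniteDimensional ℝ W] (h : BilinFormHasType B r q)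
    {L : Submodule ℝ W} (hL : L ≤ B.orthogonal L) : finrank ℝ L ≤ r := by
  have hle := QuadraticForm.sigPos_add_finrank_le_of_nonpos
    (Q := LinearMap.BilinMap.toQuadraticMap B) (V := L) fun x hx => (hL hx x hx).le
  rw [h.sigPos_eq, h.finrank_eq] at hle
  lia

lemma finrank_le_right_of_isotropic [FiniteDimensional ℝ W] (h : BilinFormHasType B r q)
    {L : Submodule ℝ W} (hL : L ≤ B.orthogonal L) : finrank ℝ L ≤ q :=
  h.neg.finrank_le_left_of_isotropic fun x hx y hy => by simp [hL hx y hy]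

lemma of_isCompl {W₁ W₂ : Submodule ℝ W} (hB : B.IsSymm) (hc : IsCompl W₁ W₂)
    (horth : ∀ x ∈ W₁, ∀ y ∈ W₂, B x y = 0) {r₁ q₁ r₂ q₂ : ℕ}
    (h₁ : BilinFormHasType (B.restrict W₁) r₁ q₁) (h₂ : BilinFormHasType (B.restrict W₂) r₂ q₂) :
    BilinFormHasType B (r₁ + r₂) (q₁ + q₂) := by
  obtain ⟨b₁, horth₁, hneg₁, hpos₁⟩ := h₁
  obtain ⟨b₂, horth₂, hneg₂, hpos₂⟩ := h₂
  let b := (b₁.prod b₂).map (W₁.prodEquivOfIsCompl W₂ hc)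
  have hb : ∀ i j, i ≠ j → B (b i) (b j) = 0 := by
    rintro (i | i) (j | j) hij
    · simpa [b] using horth₁ i j (by simpa using hij)
    · simpa [b] using horth _ (b₁ i).2 _ (b₂ j).2
    · simpa [b, hB.eq (b₂ i : W)] using horth _ (b₁ j).2 _ (b₂ i).2
    · simpa [b] using horth₂ i j (by simpa using hij)
  let e := Equiv.sumSumSumComm (Fin r₁) (Fin q₁) (Fin r₂) (Fin q₂)
  have hbasis : BilinFormHasType B _ _ := of_orthogonal_basis (b.reindex e) ?_ ?_ ?_
  · simpa using hbasis
  · intro i j hij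
    simpa only [Basis.reindex_apply] using hb _ _ (e.symm.injective.ne hij)
  · rintro (i | i)
    · simpa [b, e] using hneg₁ i
    · simpa [b, e] using hneg₂ i
  · rintro (i | i)
    · simpa [b, e] using hpos₁ i
    · simpa [b, e] using hpos₂ i

end BilinFormHasType

end HasType

section Witt

variable {K V W : Type*} [Field K] [AddCommGroup V] [Module K V] [AddCommGroup W] [Module K W]
  {B : LinearMap.BilinForm K W} {β : V →ₗ[K] V →ₗ[K] W} {U W₁ W₂ : Submodule K W}

lemma nondegenerate_restrict_of_isCompl (hB : B.IsSymm) (hBnd : B.Nondegenerate)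
    (hc : IsCompl W₁ W₂) (horth : ∀ x ∈ W₁, ∀ y ∈ W₂, B x y = 0) :
    (B.restrict W₁).Nondegenerate := by
  refine B.nondegenerate_restrict_of_disjoint_orthogonal hB.isRefl
    (disjoint_def.2 fun x hx hx_orth => hBnd.1 x fun y => ?_)
  obtain ⟨y₁, hy₁, y₂, hy₂, rfl⟩ := mem_sup.1 (hc.sup_eq_top ▸ mem_top (x := y))
  rw [map_add, hB.eq x y₁, hx_orth y₁ hy₁, horth x hx y₂ hy₂, add_zero]

/-- An orthogonal decomposition `W = W₁ ⊕ W₂` adapted to a totally isotropic subspace `U`: the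
subspace `U` is a Lagrangian of `W₁`, which amounts to `U ≤ W₁` and `U⊥ = U ⊕ W₂`. -/
structure IsWittDecomposition (B : LinearMap.BilinForm K W) (U W₁ W₂ : Submodule K W) : Prop where
  isCompl : IsCompl W₁ W₂
  orthogonal : ∀ x ∈ W₁, ∀ y ∈ W₂, B x y = 0
  le_left : U ≤ W₁
  orthogonal_le_sup : B.orthogonal U ≤ U ⊔ W₂

lemma exists_le_finrank_eq_two_mul_of_isotropic [FiniteDimensional K W] (hB : B.IsSymm)
    (hBnd : B.Nondegenerate) (hU : U ≤ B.orthogonal U) :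
    ∃ W₁, U ≤ W₁ ∧ finrank K W₁ = 2 * finrank K U ∧ IsCompl W₁ (B.orthogonal W₁) := by
  obtain ⟨Z, hZ⟩ := (B.orthogonal U).exists_isCompl
  refine ⟨U ⊔ Z, le_sup_left, ?_, ?_⟩
  · have hsum := finrank_add_eq_of_isCompl hZ
    have hsup := finrank_sup_add_finrank_inf_eq U Z
    rw [(hZ.disjoint.mono_left hU).eq_bot, finrank_bot] at hsup
    have horth := LinearMap.BilinForm.finrank_orthogonal hBnd U
    have hle := U.finrank_le
    lia
  · rw [LinearMap.BilinForm.isCompl_orthogonal_iff_disjoint hB.isRefl, disjoint_def]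
    intro x hx hx_orth
    obtain ⟨u, hu, z, hz, rfl⟩ := mem_sup.1 hx
    have hxU : u + z ∈ B.orthogonal U := LinearMap.BilinForm.orthogonal_le le_sup_left hx_orth
    have hz0 : z = 0 := disjoint_def.1 hZ.disjoint z ((add_mem_cancel_left (hU hu)).1 hxU) hz
    rw [hz0, add_zero] at hx_orth ⊢
    have hu_orth : u ∈ B.orthogonal (B.orthogonal U ⊔ Z) := by
      intro t ht
      obtain ⟨a, ha, z, hz, rfl⟩ := mem_sup.1 ht
      rw [map_add, LinearMap.add_apply, hx_orth z (mem_sup_right hz), add_zero, hB.eq]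
      exact ha u hu
    rw [hZ.sup_eq_top, LinearMap.BilinForm.orthogonal_top_eq_bot hBnd] at hu_orth
    exact hu_orth

lemma exists_isWittDecomposition_finrank_eq [FiniteDimensional K W] (hB : B.IsSymm)
    (hBnd : B.Nondegenerate) (hU : U ≤ B.orthogonal U) :
    ∃ W₁ W₂, IsWittDecomposition B U W₁ W₂ ∧ finrank K W₁ = 2 * finrank K U := by
  obtain ⟨W₁, hUW₁, hrank, hc⟩ := exists_le_finrank_eq_two_mul_of_isotropic hB hBnd hU
  refine ⟨W₁, B.orthogonal W₁, ⟨hc, fun x hx y hy => hy x hx, hUW₁, ?_⟩, hrank⟩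
  refine (Submodule.eq_of_le_of_finrank_le
    (sup_le hU (LinearMap.BilinForm.orthogonal_le hUW₁)) ?_).ge
  have hsup := finrank_sup_add_finrank_inf_eq U (B.orthogonal W₁)
  rw [(hc.disjoint.mono_left hUW₁).eq_bot, finrank_bot] at hsup
  have horth₁ := LinearMap.BilinForm.finrank_orthogonal hBnd W₁
  have horth := LinearMap.BilinForm.finrank_orthogonal hBnd U
  lia

namespace IsWittDecomposition

lemma nondegenerate_restrict (hD : IsWittDecomposition B U W₁ W₂) (hB : B.IsSymm)
    (hBnd : B.Nondegenerate) :
    (B.restrict W₁).Nondegenerate ∧ (B.restrict W₂).Nondegenerate :=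
  ⟨nondegenerate_restrict_of_isCompl hB hBnd hD.isCompl hD.orthogonal,
    nondegenerate_restrict_of_isCompl hB hBnd hD.isCompl.symm fun x hx y hy => by
      rw [hB.eq]; exact hD.orthogonal y hy x hx⟩

lemma projection_mem (hD : IsWittDecomposition B U W₁ W₂) {x : W} (hx : x ∈ B.orthogonal U) :
    W₁.projection W₂ hD.isCompl x ∈ U := by
  obtain ⟨u, hu, w, hw, rfl⟩ := mem_sup.1 (hD.orthogonal_le_sup hx)
  rwa [map_add, projection_apply_of_mem_left _ (hD.le_left hu),
    projection_apply_of_mem_right _ hw, add_zero]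

lemma apply_projection_projection (hD : IsWittDecomposition B U W₁ W₂) (hB : B.IsSymm)
    {x y : W} (hx : x ∈ B.orthogonal U) (hy : y ∈ B.orthogonal U) :
    B (W₂.projection W₁ hD.isCompl.symm x) (W₂.projection W₁ hD.isCompl.symm y) = B x y := by
  have hleft : B (W₁.projection W₂ hD.isCompl x) y = 0 := hy _ (hD.projection_mem hx)
  have hright : B (W₂.projection W₁ hD.isCompl.symm x) (W₁.projection W₂ hD.isCompl y) = 0 := by
    rw [hB.eq]
    exact hD.orthogonal _ (projection_apply_mem ..) _ (projection_apply_mem ..)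
  calc
    _ = B (W₂.projection W₁ hD.isCompl.symm x) y := by
      conv_rhs => rw [← projection_add_projection_eq_self hD.isCompl y]
      rw [map_add, hright, zero_add]
    _ = B x y := by
      conv_rhs => rw [← projection_add_projection_eq_self hD.isCompl x]
      rw [map_add, LinearMap.add_apply, hleft, zero_add]

end IsWittDecomposition

lemma imageRadical_le_orthogonal (B : LinearMap.BilinForm K W) (β : V →ₗ[K] V →ₗ[K] W) :
    imageRadical B β ≤ B.orthogonal (imageRadical B β) :=
  inf_le_right.trans (LinearMap.BilinForm.orthogonal_le inf_le_left)

lemma imageSpan_le_orthogonal_imageRadical (hB : B.IsSymm) :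
    imageSpan β ≤ B.orthogonal (imageRadical B β) :=
  (LinearMap.BilinForm.le_orthogonal_orthogonal hB.isRefl).trans
    (LinearMap.BilinForm.orthogonal_le inf_le_right)

lemma apply_mem_orthogonal_imageRadical (hB : B.IsSymm) (X Y : V) :
    β X Y ∈ B.orthogonal (imageRadical B β) :=
  imageSpan_le_orthogonal_imageRadical hB (apply_mem_imageSpan β X Y)

lemma imageSpan_compr₂ {F : Type*} [AddCommGroup F] [Module K F] (f : W →ₗ[K] F) :
    imageSpan (β.compr₂ f) = (imageSpan β).map f := by
  refine le_antisymm (imageSpan_le_iff.2 fun X Y => mem_map_of_mem (apply_mem_imageSpan β X Y)) ?_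
  rw [map_le_iff_le_comap, imageSpan_le_iff]
  exact fun X Y => apply_mem_imageSpan (β.compr₂ f) X Y

namespace IsWittDecomposition

variable (hD : IsWittDecomposition B (imageRadical B β) W₁ W₂)
include hD

lemma compr₂_projection_ne_zero (hrad : imageRadical B β ≠ ⊥) :
    β.compr₂ (W₁.projection W₂ hD.isCompl) ≠ 0 := by
  intro hzero
  have hle : imageSpan β ≤ W₂ := imageSpan_le_iff.2 fun X Y =>
    (projection_apply_eq_zero_iff hD.isCompl).1 (LinearMap.congr_fun₂ hzero X Y)
  exact hrad (eq_bot_iff.2 fun w hw =>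
    disjoint_def.1 hD.isCompl.disjoint w (hD.le_left hw) (hle hw.1))

lemma apply_compr₂_projection_eq_zero (hB : B.IsSymm) (X Y Z T : V) :
    B (β.compr₂ (W₁.projection W₂ hD.isCompl) X Y)
      (β.compr₂ (W₁.projection W₂ hD.isCompl) Z T) = 0 :=
  imageRadical_le_orthogonal B β
    (hD.projection_mem (apply_mem_orthogonal_imageRadical hB Z T)) _
    (hD.projection_mem (apply_mem_orthogonal_imageRadical hB X Y))

lemma isFlatSymm_compr₂_projection (hB : B.IsSymm) (hβ : IsFlatSymm B β) :
    IsFlatSymm B (β.compr₂ (W₂.projection W₁ hD.isCompl.symm)) where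
  symm X Y := by simp only [LinearMap.compr₂_apply, hβ.symm X Y]
  flat X Y Z T := by
    simp only [LinearMap.compr₂_apply, hD.apply_projection_projection hB
      (apply_mem_orthogonal_imageRadical hB _ _) (apply_mem_orthogonal_imageRadical hB _ _)]
    exact hβ.flat X Y Z T

lemma isFlatSymm_compr₂_projectionOnto (hB : B.IsSymm) (hβ : IsFlatSymm B β) :
    IsFlatSymm (B.restrict W₂) (β.compr₂ (W₂.projectionOnto W₁ hD.isCompl.symm)) where
  symm X Y := by simp only [LinearMap.compr₂_apply, hβ.symm X Y]
  flat := (hD.isFlatSymm_compr₂_projection hB hβ).flat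

lemma imageRadical_compr₂_projectionOnto (hB : B.IsSymm) :
    imageRadical (B.restrict W₂) (β.compr₂ (W₂.projectionOnto W₁ hD.isCompl.symm)) = ⊥ := by
  rw [eq_bot_iff]
  rintro _ ⟨hw, hw_orth⟩
  rw [imageSpan_compr₂] at hw hw_orth
  obtain ⟨s, hs, rfl⟩ := hw
  have hs_orth : s ∈ B.orthogonal (imageSpan β) := fun t ht => by
    rw [← hD.apply_projection_projection hB (imageSpan_le_orthogonal_imageRadical hB ht)
      (imageSpan_le_orthogonal_imageRadical hB hs)]
    exact hw_orth _ (mem_map_of_mem ht)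
  exact (projectionOnto_apply_eq_zero_iff _).2 (hD.le_left ⟨hs, hs_orth⟩)

end IsWittDecomposition

lemma iInf_ker_eq_ker (hβ : ∀ X Y, β X Y = β Y X) :
    ⨅ X, LinearMap.ker (β X) = LinearMap.ker β := by
  ext n
  simp [LinearMap.ext_iff, hβ n]

end Witt

section Real

variable {V W : Type*} [AddCommGroup W] [Module ℝ W] [FiniteDimensional ℝ W]
  {B : LinearMap.BilinForm ℝ W} {r q : ℕ}

namespace BilinFormHasType

lemma of_lagrangian (hB : B.IsSymm) (hBnd : B.Nondegenerate) {U : Submodule ℝ W}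
    (hU : U ≤ B.orthogonal U) (hrank : finrank ℝ W = 2 * finrank ℝ U) :
    BilinFormHasType B (finrank ℝ U) (finrank ℝ U) := by
  obtain ⟨r, q, h⟩ := exists_of_nondegenerate hB hBnd
  have hr := h.finrank_le_left_of_isotropic hU
  have hq := h.finrank_le_right_of_isotropic hU
  have hrq := h.finrank_eq
  obtain rfl : r = finrank ℝ U := by lia
  obtain rfl : q = finrank ℝ U := by lia
  exact h

lemma exists_isWittDecomposition (h : BilinFormHasType B r q) {U : Submodule ℝ W}
    (hU : U ≤ B.orthogonal U) :
    ∃ W₁ W₂, IsWittDecomposition B U W₁ W₂ ∧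
      BilinFormHasType (B.restrict W₁) (finrank ℝ U) (finrank ℝ U) ∧
      BilinFormHasType (B.restrict W₂) (r - finrank ℝ U) (q - finrank ℝ U) := by
  obtain ⟨W₁, W₂, hD, hrank⟩ := exists_isWittDecomposition_finrank_eq h.isSymm h.nondegenerate hU
  obtain ⟨hnd₁, hnd₂⟩ := hD.nondegenerate_restrict h.isSymm h.nondegenerate
  have hU₁ : finrank ℝ (U.submoduleOf W₁) = finrank ℝ U :=
    (submoduleOfEquivOfLe hD.le_left).finrank_eq
  have h₁ : BilinFormHasType (B.restrict W₁) (finrank ℝ U) (finrank ℝ U) :=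
    hU₁ ▸ of_lagrangian (h.isSymm.restrict W₁) hnd₁ (fun x hx y hy => hU hx y hy)
      (hrank.trans (by rw [hU₁]))
  obtain ⟨r₂, q₂, h₂⟩ := exists_of_nondegenerate (h.isSymm.restrict W₂) hnd₂
  obtain ⟨rfl, rfl⟩ := h.unique (of_isCompl h.isSymm hD.isCompl hD.orthogonal h₁ h₂)
  exact ⟨W₁, W₂, hD, h₁, by simpa only [Nat.add_sub_cancel_left] using h₂⟩

end BilinFormHasType

variable [AddCommGroup V] [Module ℝ V] [FiniteDimensional ℝ V] {β : V →ₗ[ℝ] V →ₗ[ℝ] W}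

lemma IsFlatSymm.finrank_le_finrank_ker_add (hβ : IsFlatSymm B β) (hB : BilinFormHasType B r q)
    (hrad : imageRadical B β = ⊥) (hrq : min r q < 6) :
    finrank ℝ V ≤ finrank ℝ (LinearMap.ker β) + finrank ℝ W := by
  by_contra! hdim
  obtain ⟨L, hL, hL_iso⟩ :=
    hβ.exists_finrank_eq_six_le_orthogonal hB.nondegenerate hrad hdim
  have hr := hB.finrank_le_left_of_isotropic hL_iso
  have hq := hB.finrank_le_right_of_isotropic hL_iso
  lia

lemma IsWittDecomposition.finrank_le_finrank_ker_add {W₁ W₂ : Submodule ℝ W}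
    (hD : IsWittDecomposition B (imageRadical B β) W₁ W₂) (hB : B.IsSymm) (hβ : IsFlatSymm B β)
    (h₂ : BilinFormHasType (B.restrict W₂) r q) (hrq : min r q < 6) :
    finrank ℝ V ≤
      finrank ℝ (LinearMap.ker (β.compr₂ (W₂.projection W₁ hD.isCompl.symm))) +
        finrank ℝ W₂ := by
  have hker : LinearMap.ker (β.compr₂ (W₂.projection W₁ hD.isCompl.symm)) =
      LinearMap.ker (β.compr₂ (W₂.projectionOnto W₁ hD.isCompl.symm)) := by
    ext X
    simp [LinearMap.ext_iff]
  rw [hker]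
  exact (hD.isFlatSymm_compr₂_projectionOnto hB hβ).finrank_le_finrank_ker_add h₂
    (hD.imageRadical_compr₂_projectionOnto hB) hrq

theorem statement6_general (hrq : min r q ≤ 6) (hVW : finrank ℝ W < finrank ℝ V)
    (htype : BilinFormHasType B r q) (hβ : IsFlatSymm B β) (hne : ∀ X : V, X ≠ 0 → β X X ≠ 0)
    {ℓ : ℕ} (hℓ : ℓ = finrank ℝ (imageRadical B β)) :
    1 ≤ ℓ ∧
    ∃ (W₁ W₂ : Submodule ℝ W) (_ : IsCompl W₁ W₂) (ω₁ ω₂ : V →ₗ[ℝ] V →ₗ[ℝ] W),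
      (∀ x ∈ W₁, ∀ y ∈ W₂, B x y = 0) ∧
      BilinFormHasType (B.restrict W₁) ℓ ℓ ∧
      BilinFormHasType (B.restrict W₂) (r - ℓ) (q - ℓ) ∧
      (∀ X Y, ω₁ X Y ∈ W₁) ∧ (∀ X Y, ω₂ X Y ∈ W₂) ∧
      (∀ X Y, ω₁ X Y = ω₁ Y X) ∧ (∀ X Y, ω₂ X Y = ω₂ Y X) ∧
      (∀ X Y, β X Y = ω₁ X Y + ω₂ X Y) ∧
      ω₁ ≠ 0 ∧
      (∀ X Y Z U, B (ω₁ X Y) (ω₁ Z U) = 0) ∧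
      (∀ X Y Z U, B (ω₂ X Y) (ω₂ Z U) = B (ω₂ X U) (ω₂ Y Z)) ∧
      finrank ℝ V ≤ finrank ℝ (⨅ X, LinearMap.ker (ω₂ X) : Submodule ℝ V) + finrank ℝ W₂ := by
  have hB := htype.isSymm
  have hrad : imageRadical B β ≠ ⊥ := hβ.imageRadical_ne_bot hVW hne
  have hℓ_pos : 1 ≤ ℓ := hℓ ▸ one_le_finrank_iff.2 hrad
  obtain ⟨W₁, W₂, hD, h₁, h₂⟩ :=
    htype.exists_isWittDecomposition (imageRadical_le_orthogonal B β)
  rw [← hℓ] at h₁ h₂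
  have hω₂ := hD.isFlatSymm_compr₂_projection hB hβ
  have hnull := hD.finrank_le_finrank_ker_add hB hβ h₂ (by lia)
  rw [← iInf_ker_eq_ker hω₂.symm] at hnull
  exact ⟨hℓ_pos, W₁, W₂, hD.isCompl, β.compr₂ (W₁.projection W₂ hD.isCompl),
    β.compr₂ (W₂.projection W₁ hD.isCompl.symm), hD.orthogonal, h₁, h₂,
    fun X Y => projection_apply_mem .., fun X Y => projection_apply_mem ..,
    fun X Y => by simp only [LinearMap.compr₂_apply, hβ.symm X Y], hω₂.symm,
    fun X Y => (projection_add_projection_eq_self hD.isCompl (β X Y)).symm,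
    hD.compr₂_projection_ne_zero hrad, hD.apply_compr₂_projection_eq_zero hB, hω₂.flat, hnull⟩

end Real

/-- Assertion in the proof of Lemma 2.3. Let `d ≤ 5`, `n > 2d+3`, `V` an
`n`-dimensional real vector space and `W` a `(2d+3)`-dimensional real vector space with a
nondegenerate symmetric bilinear form of type `(d+1, d+2)`. Let `β : V × V → W` be flat
symmetric with `β(X,X) ≠ 0` for `X ≠ 0`. Then `ℓ := dim (S(β) ∩ S(β)⊥) ≥ 1` and there is an
orthogonal decomposition `W = W₁ ⊕ W₂` with the form of type `(ℓ,ℓ)` on `W₁` and of type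
`(d-ℓ+1, d-ℓ+2)` on `W₂`, and symmetric bilinear maps `ω₁, ω₂` into `W₁, W₂` with
`β = ω₁ + ω₂`, `ω₁` nonzero and null, and `ω₂` flat with `dim N(ω₂) ≥ n - dim W₂`. -/
theorem statement6 {V W : Type*} [AddCommGroup V] [Module ℝ V] [FiniteDimensional ℝ V]
    [AddCommGroup W] [Module ℝ W] [FiniteDimensional ℝ W]
    (d n : ℕ) (hd : d ≤ 5) (hn : 2 * d + 3 < n)
    (hV : finrank ℝ V = n) (hW : finrank ℝ W = 2 * d + 3)
    (B : LinearMap.BilinForm ℝ W) (hBsymm : ∀ x y, B x y = B y x) (hBnd : B.Nondegenerate)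
    (htype : BilinFormHasType B (d + 1) (d + 2))
    (β : V →ₗ[ℝ] V →ₗ[ℝ] W) (hsymm : ∀ X Y, β X Y = β Y X)
    (hflat : ∀ X Y Z U, B (β X Y) (β Z U) = B (β X U) (β Y Z))
    (hne : ∀ X : V, X ≠ 0 → β X X ≠ 0)
    (S : Submodule ℝ W) (hS : S = span ℝ {w | ∃ X Y, β X Y = w})
    (ℓ : ℕ) (hℓ : ℓ = finrank ℝ (S ⊓ B.orthogonal S : Submodule ℝ W)) :
    1 ≤ ℓ ∧
    ∃ (W₁ W₂ : Submodule ℝ W) (_ : IsCompl W₁ W₂) (ω₁ ω₂ : V →ₗ[ℝ] V →ₗ[ℝ] W),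
      (∀ x ∈ W₁, ∀ y ∈ W₂, B x y = 0) ∧
      BilinFormHasType (B.restrict W₁) ℓ ℓ ∧
      BilinFormHasType (B.restrict W₂) (d + 1 - ℓ) (d + 2 - ℓ) ∧
      (∀ X Y, ω₁ X Y ∈ W₁) ∧ (∀ X Y, ω₂ X Y ∈ W₂) ∧
      (∀ X Y, ω₁ X Y = ω₁ Y X) ∧ (∀ X Y, ω₂ X Y = ω₂ Y X) ∧
      (∀ X Y, β X Y = ω₁ X Y + ω₂ X Y) ∧
      ω₁ ≠ 0 ∧
      (∀ X Y Z U, B (ω₁ X Y) (ω₁ Z U) = 0) ∧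
      (∀ X Y Z U, B (ω₂ X Y) (ω₂ Z U) = B (ω₂ X U) (ω₂ Y Z)) ∧
      n ≤ finrank ℝ (⨅ X, LinearMap.ker (ω₂ X) : Submodule ℝ V) + finrank ℝ W₂ := by
  subst hS hℓ hV
  exact statement6_general (by lia) (hW.trans_lt hn) htype ⟨hsymm, hflat⟩ hne rfl
end
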